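/- arXiv:2502.20328 — 4 statements merged into one kernel-verified Lean document; each statement's English description precedes it below -/
import Mathlib

section
/- For every β > 0 and every s ∈ ℝ with s ≠ 0, the improper integral ∫₀^∞ r·cos(r s)/(e^{β r} − 1) dr converges and equals 1/(2s²) − (π²/(2β²))·(1/sinh²(π s/β)). -/
open MeasureTheory Real Set

/-!
Expanding the Bose–Einstein factor as the geometric series `∑ exp (-(n + 1) β r)` and integrating
term by term gives `∫₀^∞ r exp (-z r) / (exp (β r) - 1) dr = ∑ 1 / (z + (n + 1) β) ^ 2` for
`Re z > -β`. Adding the cases `z = ± i s` produces `β⁻²` times the sum of `1 / (i s / β + n) ^ 2`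
over the nonzero integers `n`, and differentiating the partial fraction expansion of the cotangent
evaluates it, since `sin (π i s / β) = i sinh (π s / β)`.
-/

section ExpLaplace

lemma norm_ofReal_mul_cexp_neg_mul (a : ℂ) {t : ℝ} (ht : 0 ≤ t) :
    ‖(t : ℂ) * Complex.exp (-a * t)‖ = t * Real.exp (-a.re * t) := by
  simp [Complex.norm_exp, abs_of_nonneg ht]

lemma integrableOn_mul_exp_neg_mul_Ioi {b : ℝ} (hb : 0 < b) :
    IntegrableOn (fun t : ℝ => t * Real.exp (-b * t)) (Ioi 0) := by
  simpa using integrableOn_rpow_mul_exp_neg_mul_rpow (p := 1) (s := 1) (by norm_num) one_pos hb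

lemma integral_mul_exp_neg_mul_Ioi {b : ℝ} (hb : 0 < b) :
    ∫ t in Ioi (0 : ℝ), t * Real.exp (-b * t) = 1 / b ^ 2 := by
  have h := Real.integral_rpow_mul_exp_neg_mul_Ioi two_pos hb
  simpa [show (2 : ℝ) - 1 = 1 by norm_num] using h

variable {a : ℂ}

lemma integrableOn_mul_cexp_neg_mul_Ioi (ha : 0 < a.re) :
    IntegrableOn (fun t : ℝ => (t : ℂ) * Complex.exp (-a * t)) (Ioi 0) := by
  refine (integrableOn_mul_exp_neg_mul_Ioi ha).mono' (by fun_prop) ?_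
  filter_upwards [ae_restrict_mem measurableSet_Ioi] with t ht
  exact (norm_ofReal_mul_cexp_neg_mul a (le_of_lt ht)).le

lemma integral_mul_cexp_neg_mul_Ioi (ha : 0 < a.re) :
    ∫ t in Ioi (0 : ℝ), (t : ℂ) * Complex.exp (-a * t) = 1 / a ^ 2 := by
  have ha0 : a ≠ 0 := by rintro rfl; simp at ha
  let F : ℝ → ℂ := fun t => -((t : ℂ) * Complex.exp (-a * t)) / a - Complex.exp (-a * t) / a ^ 2
  have hderiv (t : ℝ) : HasDerivAt F ((t : ℂ) * Complex.exp (-a * t)) t := by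
    have hid : HasDerivAt (fun t : ℝ => (t : ℂ)) 1 t := Complex.ofRealCLM.hasDerivAt
    have hexp : HasDerivAt (fun t : ℝ => Complex.exp (-a * t)) _ t := (hid.const_mul (-a)).cexp
    refine (((hid.mul hexp).neg.div_const a).sub (hexp.div_const (a ^ 2))).congr_deriv ?_
    field_simp
    ring
  have hint := integrableOn_mul_cexp_neg_mul_Ioi ha
  have hF : IntegrableOn F (Ioi 0) :=
    (hint.neg.div_const a).sub
      ((integrableOn_exp_mul_complex_Ioi (a := -a) (by simpa using ha) 0).div_const (a ^ 2))
  have hlim := tendsto_zero_of_hasDerivAt_of_integrableOn_Ioi (fun t _ => hderiv t) hint hF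
  rw [integral_Ioi_of_hasDerivAt_of_tendsto' (fun t _ => hderiv t) hint hlim]
  simp [F]

end ExpLaplace

section BoseEinstein

lemma div_exp_sub_one_le {x : ℝ} (hx : 0 < x) :
    x / (Real.exp x - 1) ≤ (x + 1) * Real.exp (-x) := by
  have hexp := Real.add_one_lt_exp hx.ne'
  rw [Real.exp_neg, ← div_eq_mul_inv, div_le_div_iff₀ (by linarith) (Real.exp_pos x)]
  linarith

lemma hasSum_cexp_neg_succ_mul {w : ℂ} (hw : 0 < w.re) :
    HasSum (fun n : ℕ => Complex.exp (-((n + 1) * w))) (1 / (Complex.exp w - 1)) := by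
  have hlt : ‖Complex.exp (-w)‖ < 1 := by simpa [Complex.norm_exp] using hw
  convert! (hasSum_geometric_of_norm_lt_one hlt).mul_left (Complex.exp (-w)) using 1
  · ext n
    rw [← Complex.exp_nat_mul, ← Complex.exp_add]
    ring_nf
  · rw [Complex.exp_neg, ← mul_inv, mul_sub, mul_one, mul_inv_cancel₀ (Complex.exp_ne_zero w),
      one_div]

variable {β : ℝ} {z : ℂ}

lemma integrableOn_mul_cexp_div_cexp_sub_one (hβ : 0 < β) (hz : -β < z.re) :
    IntegrableOn (fun r : ℝ => (r : ℂ) * Complex.exp (-z * r) / (Complex.exp (β * r) - 1))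
      (Ioi 0) := by
  have hrate : 0 < β + z.re := by linarith
  have hdom : IntegrableOn (fun r : ℝ => r * Real.exp (-(β + z.re) * r) +
      β⁻¹ * Real.exp (-(β + z.re) * r)) (Ioi 0) :=
    (integrableOn_mul_exp_neg_mul_Ioi hrate).add
      ((integrableOn_exp_mul_Ioi (neg_neg_of_pos hrate) 0).const_mul β⁻¹)
  refine hdom.mono' (Measurable.aestronglyMeasurable (by fun_prop)) ?_
  filter_upwards [ae_restrict_mem measurableSet_Ioi] with r (hr : 0 < r)
  have hpos : 0 < Real.exp (β * r) - 1 := by simpa using mul_pos hβ hr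
  have hden : ‖Complex.exp (β * r) - 1‖ = Real.exp (β * r) - 1 := by
    rw [← Complex.norm_of_nonneg hpos.le]
    push_cast
    rfl
  rw [norm_div, norm_ofReal_mul_cexp_neg_mul z hr.le, hden]
  calc r * Real.exp (-z.re * r) / (Real.exp (β * r) - 1)
      = β⁻¹ * Real.exp (-z.re * r) * (β * r / (Real.exp (β * r) - 1)) := by field_simp
    _ ≤ β⁻¹ * Real.exp (-z.re * r) * ((β * r + 1) * Real.exp (-(β * r))) := by
        gcongr
        exact div_exp_sub_one_le (mul_pos hβ hr)
    _ = r * Real.exp (-(β + z.re) * r) + β⁻¹ * Real.exp (-(β + z.re) * r) := by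
        rw [show -(β + z.re) * r = -z.re * r + -(β * r) by ring, Real.exp_add]
        field_simp

lemma summable_one_div_add_succ_mul_sq (hβ : β ≠ 0) (c : ℝ) :
    Summable fun n : ℕ => 1 / (c + (n + 1) * β) ^ 2 := by
  have h := ((Real.summable_one_div_nat_add_rpow (c / β + 1) 2).2 one_lt_two).mul_left (1 / β ^ 2)
  refine h.congr fun n => ?_
  rw [Real.rpow_two, sq_abs, one_div_mul_one_div, ← mul_pow]
  congr 2
  field_simp
  ring

theorem hasSum_integral_mul_cexp_div_cexp_sub_one (hβ : 0 < β) (hz : -β < z.re) :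
    HasSum (fun n : ℕ => 1 / (z + (n + 1) * β) ^ 2)
      (∫ r in Ioi (0 : ℝ), (r : ℂ) * Complex.exp (-z * r) / (Complex.exp (β * r) - 1)) := by
  have hre (n : ℕ) : (z + (n + 1) * β).re = z.re + (n + 1) * β := by simp
  have hpos (n : ℕ) : 0 < z.re + (n + 1) * β := by nlinarith [n.cast_nonneg (α := ℝ)]
  have hpos' (n : ℕ) : 0 < (z + (n + 1) * β).re := hre n ▸ hpos n
  have hnorm (n : ℕ) : ∫ r in Ioi (0 : ℝ), ‖(r : ℂ) * Complex.exp (-(z + (n + 1) * β) * r)‖ =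
      1 / (z.re + (n + 1) * β) ^ 2 := by
    rw [← integral_mul_exp_neg_mul_Ioi (hpos n)]
    refine setIntegral_congr_fun measurableSet_Ioi fun r hr => ?_
    rw [← hre, norm_ofReal_mul_cexp_neg_mul _ (le_of_lt hr)]
  have hseries : ∀ r ∈ Ioi (0 : ℝ), ∑' n : ℕ, (r : ℂ) * Complex.exp (-(z + (n + 1) * β) * r) =
      r * Complex.exp (-z * r) / (Complex.exp (β * r) - 1) := by
    intro r (hr : 0 < r)
    have hre_pos : 0 < (β * r : ℂ).re := by simpa using mul_pos hβ hr
    have hgeom := (hasSum_cexp_neg_succ_mul hre_pos).mul_left (r * Complex.exp (-z * r))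
    rw [← mul_one_div, ← hgeom.tsum_eq]
    refine tsum_congr fun n => ?_
    rw [mul_assoc, ← Complex.exp_add]
    ring_nf
  have hsum := hasSum_integral_of_summable_integral_norm
    (fun n => integrableOn_mul_cexp_neg_mul_Ioi (hpos' n))
    (by simpa only [hnorm] using summable_one_div_add_succ_mul_sq hβ.ne' z.re)
  rw [setIntegral_congr_fun measurableSet_Ioi hseries] at hsum
  simpa only [integral_mul_cexp_neg_mul_Ioi (hpos' _)] using hsum

end BoseEinstein

section Cosecant

variable {z : ℂ}

lemma exists_ball_forall_norm_add_intCast_le (hz : z ∈ Complex.integerComplement) :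
    ∃ δ > 0, Metric.ball z δ ⊆ Complex.integerComplement ∧
      ∀ w ∈ Metric.ball z δ, ∀ n : ℤ, ‖z + n‖ ≤ 2 * ‖w + n‖ := by
  obtain ⟨ε, hε, hball⟩ := Metric.isOpen_iff.1 Complex.isOpen_compl_range_intCast z hz
  refine ⟨ε / 2, half_pos hε, (Metric.ball_subset_ball (half_le_self hε.le)).trans hball,
    fun w hw n => ?_⟩
  have hdist : ε ≤ ‖z + n‖ := by
    by_contra! h
    have hmem : ((-n : ℤ) : ℂ) ∈ Metric.ball z ε := by
      rw [Metric.mem_ball', dist_eq_norm]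
      simpa using h
    exact hball hmem ⟨-n, rfl⟩
  have htri : ‖z + n‖ ≤ ‖w + n‖ + ‖w - z‖ := by
    simpa only [add_sub_sub_cancel, add_comm (n : ℂ)] using norm_sub_le (w + n) (w - z)
  have hw' : ‖w - z‖ < ε / 2 := by simpa [dist_eq_norm] using hw
  linarith

lemma norm_cotTerm_le_mul_norm_cotTerm {w : ℂ} (hz : z ∈ Complex.integerComplement)
    (hw : w ∈ Complex.integerComplement) (h : ∀ n : ℤ, ‖z + n‖ ≤ 2 * ‖w + n‖) (n : ℕ) :
    ‖cotTerm w n‖ ≤ 4 * (‖w‖ / ‖z‖) * ‖cotTerm z n‖ := by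
  have hadd : ‖z + (n + 1)‖ ≤ 2 * ‖w + (n + 1)‖ := by simpa using h (n + 1)
  have hsub : ‖z - (n + 1)‖ ≤ 2 * ‖w - (n + 1)‖ := by simpa [sub_eq_add_neg] using h (-(n + 1))
  have hz0 : 0 < ‖z‖ := norm_pos_iff.2 (Complex.integerComplement.ne_zero hz)
  have hzadd : 0 < ‖z + (n + 1)‖ := by
    simpa using Complex.integerComplement_add_ne_zero hz (n + 1)
  have hzsub : 0 < ‖z - (n + 1)‖ := by
    simpa [sub_eq_add_neg] using Complex.integerComplement_add_ne_zero hz (-(n + 1))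
  rw [cotTerm_identity hz, cotTerm_identity hw]
  simp only [norm_mul, norm_div, norm_one, Complex.norm_ofNat]
  calc 2 * ‖w‖ * (1 / (‖w + (n + 1)‖ * ‖w - (n + 1)‖))
      ≤ 2 * ‖w‖ * (1 / (‖z + (n + 1)‖ / 2 * (‖z - (n + 1)‖ / 2))) := by
        gcongr <;> linarith
    _ = 4 * (‖w‖ / ‖z‖) * (2 * ‖z‖ * (1 / (‖z + (n + 1)‖ * ‖z - (n + 1)‖))) := by
        field_simp
        ring

lemma hasDerivAt_cotTerm (hz : z ∈ Complex.integerComplement) (n : ℕ) :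
    HasDerivAt (fun w => cotTerm w n) (-(1 / (z - (n + 1)) ^ 2 + 1 / (z + (n + 1)) ^ 2)) z := by
  have hadd : z + (n + 1) ≠ 0 := by
    simpa using Complex.integerComplement_add_ne_zero hz (n + 1)
  have hsub : z - (n + 1) ≠ 0 := by
    simpa [sub_eq_add_neg] using Complex.integerComplement_add_ne_zero hz (-(n + 1))
  have hderiv := (((hasDerivAt_id z).sub_const (n + 1 : ℂ)).inv hsub).add
    (((hasDerivAt_id z).add_const (n + 1 : ℂ)).inv hadd)
  simp only [cotTerm, one_div]
  refine hderiv.congr_deriv ?_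
  simp only [id, neg_div, one_div]
  ring

lemma hasDerivAt_pi_mul_cot_pi_mul_sub_inv (hz : z ∈ Complex.integerComplement) :
    HasDerivAt (fun w => π * Complex.cot (π * w) - 1 / w)
      (-(π ^ 2 / Complex.sin (π * z) ^ 2 - 1 / z ^ 2)) z := by
  have hz0 := Complex.integerComplement.ne_zero hz
  have hsin := sin_pi_mul_ne_zero hz
  have hlin : HasDerivAt (fun w : ℂ => π * w) π z := by
    simpa using (hasDerivAt_id z).const_mul (π : ℂ)
  have hcot := ((hlin.ccos.div hlin.csin hsin).const_mul (π : ℂ)).sub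
    (hasDerivAt_inv hz0)
  simp only [Complex.cot, one_div]
  refine hcot.congr_deriv ?_
  field_simp
  linear_combination -π ^ 2 * z ^ 2 * Complex.sin_sq_add_cos_sq (π * z)

theorem hasSum_one_div_sub_sq_add_one_div_add_sq (hz : z ∈ Complex.integerComplement) :
    HasSum (fun n : ℕ => 1 / (z - (n + 1)) ^ 2 + 1 / (z + (n + 1)) ^ 2)
      (π ^ 2 / Complex.sin (π * z) ^ 2 - 1 / z ^ 2) := by
  obtain ⟨δ, hδ, hball, hcomp⟩ := exists_ball_forall_norm_add_intCast_le hz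
  have hbound (n : ℕ) (w : ℂ) (hw : w ∈ Metric.ball z δ) :
      ‖cotTerm w n‖ ≤ 4 * ((‖z‖ + δ) / ‖z‖) * ‖cotTerm z n‖ := by
    refine (norm_cotTerm_le_mul_norm_cotTerm hz (hball hw) (hcomp w hw) n).trans ?_
    gcongr
    exact (norm_lt_of_mem_ball hw).le
  have hdiff (n : ℕ) : DifferentiableOn ℂ (fun w => cotTerm w n) (Metric.ball z δ) :=
    fun w hw => (hasDerivAt_cotTerm (hball hw) n).differentiableAt.differentiableWithinAt
  have hsum := Complex.hasSum_deriv_of_summable_norm ((summable_cotTerm hz).norm.mul_left _) hdiff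
    Metric.isOpen_ball hbound (Metric.mem_ball_self hδ)
  have hcot : (fun w => ∑' n, cotTerm w n) =ᶠ[nhds z]
      fun w => π * Complex.cot (π * w) - 1 / w :=
    Filter.eventuallyEq_of_mem (Metric.ball_mem_nhds z hδ) fun w hw =>
      (cot_series_rep' (hball hw)).symm
  rw [hcot.deriv_eq, (hasDerivAt_pi_mul_cot_pi_mul_sub_inv hz).deriv] at hsum
  simpa only [(hasDerivAt_cotTerm hz _).deriv, neg_neg] using hsum.neg

end Cosecant

section BoseEinsteinCosine

variable {β : ℝ} {s : ℂ}

lemma I_mul_div_mem_integerComplement (hs : s ≠ 0) (hsβ : |s.im| < β) :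
    Complex.I * s / β ∈ Complex.integerComplement := by
  rintro ⟨n, hn⟩
  have hβ : 0 < β := (abs_nonneg _).trans_lt hsβ
  have hβ0 : (β : ℂ) ≠ 0 := by exact_mod_cast hβ.ne'
  have him : s = -Complex.I * (n * β) := by
    rw [hn]
    field_simp
    simp
  have hn1 : |n| < 1 := by
    have : |(n : ℝ)| * β < 1 * β := by simpa [him, abs_mul, abs_of_pos hβ] using hsβ
    exact_mod_cast lt_of_mul_lt_mul_right this hβ.le
  rw [Int.abs_lt_one_iff.1 hn1] at him
  exact hs (by simpa using him)

-- Both exponents are kept in the form `-z * r`, with `z = -I * s` and `z = I * s`.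
lemma mul_cos_div_eq_half_add (r : ℝ) :
    (r : ℂ) * Complex.cos (r * s) / (Complex.exp (β * r) - 1) =
      ((r : ℂ) * Complex.exp (-(-(Complex.I * s)) * r) / (Complex.exp (β * r) - 1) +
        (r : ℂ) * Complex.exp (-(Complex.I * s) * r) / (Complex.exp (β * r) - 1)) / 2 := by
  rw [Complex.cos]
  ring_nf

lemma hasSum_one_div_neg_I_mul_add_sq_add (hs : s ≠ 0) (hsβ : |s.im| < β) :
    HasSum (fun n : ℕ => 1 / (-(Complex.I * s) + (n + 1) * β) ^ 2 +
        1 / (Complex.I * s + (n + 1) * β) ^ 2)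
      (1 / s ^ 2 - π ^ 2 / β ^ 2 * (1 / Complex.sinh (π * s / β) ^ 2)) := by
  have hβ0 : (β : ℂ) ≠ 0 := by exact_mod_cast ((abs_nonneg _).trans_lt hsβ).ne'
  have hsin : Complex.sin (π * (Complex.I * s / β)) ^ 2 = -Complex.sinh (π * s / β) ^ 2 := by
    rw [show π * (Complex.I * s / β) = π * s / β * Complex.I by ring, Complex.sin_mul_I, mul_pow,
      Complex.I_sq, mul_neg_one]
  have hsub (n : ℕ) : -(Complex.I * s) + (n + 1) * β = -(β * (Complex.I * s / β - (n + 1))) := by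
    field_simp
    ring
  have hadd (n : ℕ) : Complex.I * s + (n + 1) * β = β * (Complex.I * s / β + (n + 1)) := by
    field_simp
  have hz := I_mul_div_mem_integerComplement hs hsβ
  convert! (hasSum_one_div_sub_sq_add_one_div_add_sq hz).mul_left (1 / (β : ℂ) ^ 2) using 1
  · ext n
    rw [hsub, hadd, neg_sq, mul_pow, mul_pow, mul_add, one_div_mul_one_div, one_div_mul_one_div]
  · rw [hsin, div_pow, mul_pow, Complex.I_sq]
    field_simp
    ring

end BoseEinsteinCosine

theorem stmt0_general {β : ℝ} {s : ℂ} (hs : s ≠ 0) (hsβ : |s.im| < β) :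
    IntegrableOn (fun r : ℝ => (r : ℂ) * Complex.cos (r * s) / (Complex.exp (β * r) - 1))
      (Ioi 0) ∧
    ∫ r in Ioi (0 : ℝ), (r : ℂ) * Complex.cos (r * s) / (Complex.exp (β * r) - 1) =
      1 / (2 * s ^ 2) - (π ^ 2 / (2 * β ^ 2)) * (1 / Complex.sinh (π * s / β) ^ 2) := by
  have hβ : 0 < β := (abs_nonneg _).trans_lt hsβ
  obtain ⟨hlow, hupp⟩ := abs_lt.1 hsβ
  have hneg : -β < (-(Complex.I * s)).re := by simpa
  have hpos : -β < (Complex.I * s).re := by simpa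
  have hint_neg := integrableOn_mul_cexp_div_cexp_sub_one hβ hneg
  have hint_pos := integrableOn_mul_cexp_div_cexp_sub_one hβ hpos
  have hsum := (hasSum_integral_mul_cexp_div_cexp_sub_one hβ hneg).add
    (hasSum_integral_mul_cexp_div_cexp_sub_one hβ hpos)
  simp_rw [mul_cos_div_eq_half_add]
  refine ⟨(hint_neg.add hint_pos).div_const 2, ?_⟩
  rw [integral_div, integral_add hint_neg hint_pos,
    hsum.unique (hasSum_one_div_neg_I_mul_add_sq_add hs hsβ)]
  ring

/-- For every `β > 0` and `s ≠ 0`, the integral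
`∫₀^∞ r·cos(r s)/(e^{β r} − 1) dr` converges and equals
`1/(2s²) − (π²/(2β²))·(1/sinh²(π s/β))`. -/
theorem stmt0 (β s : ℝ) (hβ : 0 < β) (hs : s ≠ 0) :
    IntegrableOn (fun r : ℝ => r * Real.cos (r * s) / (Real.exp (β * r) - 1)) (Set.Ioi 0) ∧
    ∫ r in Set.Ioi (0 : ℝ), r * Real.cos (r * s) / (Real.exp (β * r) - 1)
      = 1 / (2 * s ^ 2) - (π ^ 2 / (2 * β ^ 2)) * (1 / Real.sinh (π * s / β) ^ 2) := by
  obtain ⟨hint, hval⟩ := stmt0_general (s := s) (by exact_mod_cast hs) (by simpa using hβ)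
  norm_cast at hint hval
  exact ⟨hint.re, hval⟩
end

section
/- For all β > 0 and q > 0, the improper integral ∫₀^∞ sin(q r)/(e^{β r} − 1) dr converges and equals −1/(2q) + (π/(2β))·coth(π q/β). -/
open MeasureTheory Real Set

/-- The real hyperbolic cotangent. -/
noncomputable def coth (x : ℝ) : ℝ := Real.cosh x / Real.sinh x

/-!
Expanding the Bose–Einstein factor as the geometric series `∑ e^{-(n+1)βr}` and integrating
termwise turns the integral into `∑ q / (q² + (n+1)²β²)`, which is the Mittag-Leffler expansion of
`coth` at `πq/β` with its pole at the origin removed. The `1/r` singularity of the factor is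
cancelled by `|sin (q r)| ≤ |q| r`, and its exponential decay handles infinity.
-/

section BoseEinstein

variable {α E : Type*} [NormedAddCommGroup E] [NormedSpace ℝ E]

lemma exp_sub_one_pos {x : ℝ} (hx : 0 < x) : 0 < exp x - 1 :=
  sub_pos.2 (one_lt_exp_iff.2 hx)

lemma hasSum_exp_neg_succ_mul {x : ℝ} (hx : 0 < x) :
    HasSum (fun n : ℕ => exp (-((n + 1) * x))) (exp x - 1)⁻¹ := by
  have hgeom := (hasSum_geometric_of_lt_one (exp_pos (-x)).le
    (exp_lt_one_iff.2 (neg_lt_zero.2 hx))).mul_left (exp (-x))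
  have hsum : exp (-x) * (1 - exp (-x))⁻¹ = (exp x - 1)⁻¹ := by
    rw [exp_neg, ← mul_inv, mul_sub, mul_one, mul_inv_cancel₀ (exp_ne_zero x)]
  rw [hsum] at hgeom
  refine hgeom.congr_fun fun n => ?_
  rw [← exp_nat_mul, ← exp_add]
  ring_nf

lemma mul_exp_half_le_exp_sub_one {x : ℝ} (hx : 0 ≤ x) : x * exp (x / 2) ≤ exp x - 1 := by
  have hsinh : x / 2 ≤ sinh (x / 2) := self_le_sinh_iff.2 (by positivity)
  calc x * exp (x / 2) = 2 * (x / 2) * exp (x / 2) := by ring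
    _ ≤ 2 * sinh (x / 2) * exp (x / 2) := by gcongr
    _ = exp (x / 2 + x / 2) - exp (-(x / 2) + x / 2) := by
      rw [sinh_eq, exp_add, exp_add]
      ring
    _ = exp x - 1 := by rw [add_halves, neg_add_cancel, exp_zero]

theorem hasSum_integral_exp_neg_succ_mul_smul [MeasurableSpace α] {μ : Measure α} {h : α → ℝ}
    {f : α → E} (h_pos : ∀ᵐ x ∂μ, 0 < h x) (h_meas : AEStronglyMeasurable h μ)
    (hf : Integrable (fun x => (exp (h x) - 1)⁻¹ • f x) μ) :
    HasSum (fun n : ℕ => ∫ x, exp (-((n + 1) * h x)) • f x ∂μ)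
      (∫ x, (exp (h x) - 1)⁻¹ • f x ∂μ) := by
  have f_meas : AEStronglyMeasurable f μ := by
    have hexp : AEStronglyMeasurable (fun x => exp (h x) - 1) μ :=
      (continuous_exp.comp_aestronglyMeasurable h_meas).sub aestronglyMeasurable_const
    refine (hexp.smul hf.aestronglyMeasurable).congr ?_
    filter_upwards [h_pos] with x hx
    exact smul_inv_smul₀ (exp_sub_one_pos hx).ne' (f x)
  have hnorm (x : α) (hx : 0 < h x) :
      HasSum (fun n : ℕ => exp (-((n + 1) * h x)) * ‖f x‖) ‖(exp (h x) - 1)⁻¹ • f x‖ := by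
    rw [norm_smul, norm_of_nonneg (inv_nonneg.2 (exp_sub_one_pos hx).le)]
    exact (hasSum_exp_neg_succ_mul hx).mul_right _
  refine hasSum_integral_of_dominated_convergence
    (fun n x => exp (-((n + 1) * h x)) * ‖f x‖) (fun n => ?_) (fun n => ?_) ?_ ?_ ?_
  · exact (continuous_exp.comp_aestronglyMeasurable (h_meas.const_mul _).neg).smul f_meas
  · exact .of_forall fun x => by rw [norm_smul, norm_of_nonneg (exp_pos _).le]
  · exact h_pos.mono fun x hx => (hnorm x hx).summable
  · exact hf.norm.congr (h_pos.mono fun x hx => (hnorm x hx).tsum_eq.symm)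
  · exact h_pos.mono fun x hx => (hasSum_exp_neg_succ_mul hx).smul_const (f x)

theorem integrableOn_inv_exp_sub_one_smul_of_norm_le_mul {f : ℝ → E} {β C : ℝ} (hβ : 0 < β)
    (f_meas : AEStronglyMeasurable f (volume.restrict (Ioi 0)))
    (hf : ∀ r > 0, ‖f r‖ ≤ C * r) :
    IntegrableOn (fun r => (exp (β * r) - 1)⁻¹ • f r) (Ioi 0) := by
  have hdom : IntegrableOn (fun r => C / β * exp (-(β / 2) * r)) (Ioi 0) :=
    (integrableOn_exp_mul_Ioi (by linarith) 0).const_mul _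
  have hinv : Measurable fun r => (exp (β * r) - 1)⁻¹ := by fun_prop
  refine hdom.mono' (hinv.aestronglyMeasurable.smul f_meas) ?_
  filter_upwards [ae_restrict_mem measurableSet_Ioi] with r (hr : 0 < r)
  have hβr : 0 < β * r := mul_pos hβ hr
  calc ‖(exp (β * r) - 1)⁻¹ • f r‖ = (exp (β * r) - 1)⁻¹ * ‖f r‖ := by
        rw [norm_smul, norm_of_nonneg (inv_nonneg.2 (exp_sub_one_pos hβr).le)]
    _ ≤ (β * r * exp (β * r / 2))⁻¹ * (C * r) := by
      gcongr
      · exact mul_exp_half_le_exp_sub_one hβr.le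
      · exact hf r hr
    _ = C / β * exp (-(β / 2) * r) := by
      rw [show -(β / 2) * r = -(β * r / 2) by ring, exp_neg]
      field_simp

end BoseEinstein

section MittagLeffler

open Complex in
theorem hasSum_mittagLeffler_cosh_div_sinh {z : ℂ} (hz : z * I ∈ integerComplement) :
    HasSum (fun n : ℕ => 2 * z / (z ^ 2 + (n + 1) ^ 2))
      (π * (cosh (π * z) / sinh (π * z)) - 1 / z) := by
  have hcot := ((summable_cotTerm hz).hasSum_iff.2 (cot_series_rep' hz).symm).mul_left I
  have hvalue : I * (π * Complex.cot (π * (z * I)) - 1 / (z * I)) =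
      π * (cosh (π * z) / sinh (π * z)) - 1 / z := by
    rw [← mul_assoc (π : ℂ), Complex.cot, cos_mul_I, sin_mul_I]
    field_simp [I_ne_zero]
  rw [hvalue] at hcot
  refine hcot.congr_fun fun n => ?_
  have hfactor : (z * I + (n + 1)) * (z * I - (n + 1)) = -(z ^ 2 + (n + 1) ^ 2) := by
    linear_combination z ^ 2 * I_sq
  rw [cotTerm_identity hz, hfactor, one_div, inv_neg]
  linear_combination (2 * z / (z ^ 2 + (n + 1) ^ 2)) * I_sq

theorem hasSum_mittagLeffler_coth {y : ℝ} (hy : y ≠ 0) :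
    HasSum (fun n : ℕ => 2 * y / (y ^ 2 + (n + 1) ^ 2)) (π * coth (π * y) - 1 / y) := by
  have hyI : (y : ℂ) * Complex.I ∈ Complex.integerComplement := by
    rintro ⟨n, hn⟩
    exact hy (by simpa using (congrArg Complex.im hn).symm)
  rw [← Complex.hasSum_ofReal]
  simpa [coth] using hasSum_mittagLeffler_cosh_div_sinh hyI

end MittagLeffler

theorem integral_exp_neg_mul_sin_Ioi {b : ℝ} (hb : 0 < b) (q : ℝ) :
    ∫ r in Ioi (0 : ℝ), exp (-(b * r)) * sin (q * r) = q / (q ^ 2 + b ^ 2) := by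
  have hre : (-b + q * Complex.I : ℂ).re < 0 := by simpa using hb
  have him (r : ℝ) :
      exp (-(b * r)) * sin (q * r) = RCLike.im (Complex.exp ((-b + q * Complex.I) * r)) := by
    simp [Complex.exp_im]
  simp_rw [him]
  rw [integral_im (integrableOn_exp_mul_complex_Ioi hre 0), integral_exp_mul_complex_Ioi hre]
  simp [Complex.div_im, Complex.normSq_apply]
  ring

theorem integrableOn_sin_div_exp_sub_one {β : ℝ} (hβ : 0 < β) (q : ℝ) :
    IntegrableOn (fun r => sin (q * r) / (exp (β * r) - 1)) (Ioi 0) := by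
  have hbound (r : ℝ) (hr : r > 0) : ‖sin (q * r)‖ ≤ |q| * r := by
    simpa [abs_mul, abs_of_pos hr] using abs_sin_le_abs (x := q * r)
  have hmeas : Measurable fun r => sin (q * r) := by fun_prop
  simpa only [smul_eq_mul, inv_mul_eq_div] using
    integrableOn_inv_exp_sub_one_smul_of_norm_le_mul hβ hmeas.aestronglyMeasurable hbound

theorem hasSum_integral_sin_div_exp_sub_one {β : ℝ} (hβ : 0 < β) (q : ℝ) :
    HasSum (fun n : ℕ => q / (q ^ 2 + ((n + 1) * β) ^ 2))
      (∫ r in Ioi (0 : ℝ), sin (q * r) / (exp (β * r) - 1)) := by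
  have hpos : ∀ᵐ r ∂volume.restrict (Ioi (0 : ℝ)), 0 < β * r :=
    (ae_restrict_mem measurableSet_Ioi).mono fun r hr => mul_pos hβ hr
  have hint := integrableOn_sin_div_exp_sub_one hβ q
  simp only [← inv_mul_eq_div (exp _ - 1), ← smul_eq_mul] at hint ⊢
  refine (hasSum_integral_exp_neg_succ_mul_smul hpos (by fun_prop) hint).congr_fun fun n => ?_
  have hn : 0 < (n + 1) * β := by positivity
  simpa only [smul_eq_mul, mul_assoc] using (integral_exp_neg_mul_sin_Ioi hn q).symm

theorem stmt2_general {β q : ℝ} (hβ : 0 < β) (hq : q ≠ 0) :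
    IntegrableOn (fun r : ℝ => sin (q * r) / (exp (β * r) - 1)) (Ioi 0) ∧
    ∫ r in Ioi (0 : ℝ), sin (q * r) / (exp (β * r) - 1)
      = -(1 / (2 * q)) + (π / (2 * β)) * coth (π * q / β) := by
  refine ⟨integrableOn_sin_div_exp_sub_one hβ q, ?_⟩
  have hcoth := (hasSum_mittagLeffler_coth (div_ne_zero hq hβ.ne')).mul_left (1 / (2 * β))
  have hterm (n : ℕ) : q / (q ^ 2 + ((n + 1) * β) ^ 2) =
      1 / (2 * β) * (2 * (q / β) / ((q / β) ^ 2 + (n + 1) ^ 2)) := by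
    field_simp
  rw [(hasSum_integral_sin_div_exp_sub_one hβ q).unique (hcoth.congr_fun hterm)]
  field_simp
  ring

/-- For `β > 0` and `q > 0`, the integral
`∫₀^∞ sin(q r)/(e^{β r} − 1) dr` converges and equals `−1/(2q) + (π/(2β))·coth(π q/β)`. -/
theorem stmt2 (β q : ℝ) (hβ : 0 < β) (hq : 0 < q) :
    IntegrableOn (fun r : ℝ => Real.sin (q * r) / (Real.exp (β * r) - 1)) (Set.Ioi 0) ∧
    ∫ r in Set.Ioi (0 : ℝ), Real.sin (q * r) / (Real.exp (β * r) - 1)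
      = -(1 / (2 * q)) + (π / (2 * β)) * coth (π * q / β) :=
  stmt2_general hβ hq.ne'
end

section
/- Let β > 0, v ∈ (−1,1) with v ≠ 0, γ := 1/√(1 − v²), d₊ := γ(1 + v), d₋ := γ(1 − v), and define w̃_{β,v}(s) := (1/(4πβγv))·(f_{βd₊}(s) − f_{βd₋}(s)). Then for every E ∈ ℝ with E ≠ 0: ∫_ℝ e^{−i E s}·w̃_{β,v}(s) ds − (E/(2π))·Θ(−E) = (1/(4πβγv))·ln((1 − e^{−β d₊ E})/(1 − e^{−β d₋ E})). In particular the transition rate of an Unruh–DeWitt detector moving with constant velocity v through a β-KMS heat bath of the free massless scalar field equals (1/(4πβγv))·ln((1 − e^{−β d₊ E})/(1 − e^{−β d₋ E})). -/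
open MeasureTheory Real

/-- The function `f_c(s) := −(c/π)·Σ_{n=1}^∞ 1/(n²c² + s²)`. -/
noncomputable def fFun (c s : ℝ) : ℝ :=
  -(c / π) * ∑' n : ℕ, 1 / (((n : ℝ) + 1) ^ 2 * c ^ 2 + s ^ 2)

/-!
Since `log (1 - e^{-u}) = -∑ e^{-nu} / n` and `e^{-a|x|}` has a Lorentzian as Fourier transform,
`fFun c` is the Fourier transform of `x ↦ log (1 - e^{-2πc|x|})`. The Mittag-Leffler expansion of
the cotangent turns the series `fFun c s` into `c / (2πs²) - coth (πs/c) / (2s)`, so the tails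
`-1 / (2|s|)` of `fFun c` and `fFun d` cancel and their difference is integrable. Fourier inversion
then gives `log (1 - e^{-c|E|}) - log (1 - e^{-d|E|})`, and the vacuum term accounts for the removal
of the absolute values when `E < 0`.
-/

open Filter
open scoped FourierTransform RealInnerProductSpace

section General

variable {α ι E : Type*} [NormedAddCommGroup E]

theorem integrable_of_ae_hasSum [MeasurableSpace α] {μ : Measure α} [Countable ι]
    {F : ι → α → E} {f : α → E} (hF : ∀ i, Integrable (F i) μ)
    (hF_sum : Summable fun i ↦ ∫ a, ‖F i a‖ ∂μ) (hf : ∀ᵐ a ∂μ, HasSum (F · a) (f a)) :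
    Integrable f μ := by
  have hf_meas : AEStronglyMeasurable f μ :=
    aestronglyMeasurable_of_tendsto_ae atTop
      (fun s : Finset ι ↦ s.aestronglyMeasurable_fun_sum fun i _ ↦ (hF i).1) hf
  refine ⟨hf_meas, ?_⟩
  calc ∫⁻ a, ‖f a‖ₑ ∂μ
      ≤ ∫⁻ a, ∑' i, ‖F i a‖ₑ ∂μ :=
        lintegral_mono_ae (hf.mono fun a ha ↦ ha.tsum_eq ▸ enorm_tsum_le_tsum_enorm)
    _ = ∑' i, ∫⁻ a, ‖F i a‖ₑ ∂μ := lintegral_tsum fun i ↦ (hF i).1.enorm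
    _ = ∑' i, ENNReal.ofReal (∫ a, ‖F i a‖ ∂μ) := by
        simp only [ofReal_integral_norm_eq_lintegral_enorm (hF _)]
    _ < ⊤ := hF_sum.tsum_ofReal_lt_top

theorem integrable_of_norm_le_of_norm_mul_sq_le {g : ℝ → E} {A B : ℝ}
    (hg : AEStronglyMeasurable g) (hA : ∀ s, ‖g s‖ ≤ A) (hB : ∀ s, ‖g s‖ * s ^ 2 ≤ B) :
    Integrable g := by
  refine (integrable_inv_one_add_sq.const_mul (A + B)).mono' hg (.of_forall fun s ↦ ?_)
  rw [← div_eq_mul_inv, le_div_iff₀ (by positivity)]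
  linarith [hA s, hB s]

variable [NormedSpace ℂ E] {V : Type*} [NormedAddCommGroup V] [InnerProductSpace ℝ V]
  [FiniteDimensional ℝ V] [MeasurableSpace V] [BorelSpace V]

theorem fourier_sub_apply {f g : V → E} (hf : Integrable f) (hg : Integrable g) (w : V) :
    𝓕 (f - g) w = 𝓕 f w - 𝓕 g w := by
  simp only [Real.fourier_eq, Pi.sub_apply, smul_sub]
  exact integral_sub ((Real.fourierIntegral_convergent_iff w).2 hf)
    ((Real.fourierIntegral_convergent_iff w).2 hg)

theorem hasSum_fourier_of_ae_hasSum [Countable ι] {F : ι → V → E} {f : V → E}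
    (hF : ∀ i, Integrable (F i)) (hF_sum : Summable fun i ↦ ∫ v, ‖F i v‖)
    (hf : ∀ᵐ v, HasSum (F · v) (f v)) (w : V) : HasSum (fun i ↦ 𝓕 (F i) w) (𝓕 f w) := by
  have h_tsum : 𝓕 f w = ∫ v, ∑' i, 𝐞 (-⟪v, w⟫) • F i v :=
    integral_congr_ae (hf.mono fun v hv ↦ (hv.const_smul _).tsum_eq.symm)
  rw [h_tsum]
  refine hasSum_integral_of_summable_integral_norm
    (fun i ↦ (Real.fourierIntegral_convergent_iff w).2 (hF i)) ?_
  simpa only [Circle.norm_smul] using hF_sum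

theorem integrable_fourier_of_norm_mul_sq_le {f : ℝ → E} {B : ℝ} (hf : Integrable f)
    (hB : ∀ s, ‖𝓕 f s‖ * s ^ 2 ≤ B) : Integrable (𝓕 f) :=
  integrable_of_norm_le_of_norm_mul_sq_le
    (VectorFourier.fourierIntegral_continuous continuous_fourierChar continuous_inner
      hf).aestronglyMeasurable
    (VectorFourier.norm_fourierIntegral_le_integral_norm _ _ _ _) hB

end General

section ExpNegAbs

theorem integral_piecewise_cexp {p q : ℂ} (hp : 0 < p.re) (hq : q.re < 0) :
    ∫ x, (Set.Iic 0).piecewise (fun x : ℝ ↦ Complex.exp (p * x)) (fun x ↦ Complex.exp (q * x)) x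
      = 1 / p - 1 / q := by
  have hq_int := integrableOn_exp_mul_complex_Ioi hq 0
  rw [← Set.compl_Iic] at hq_int
  rw [integral_piecewise measurableSet_Iic (integrableOn_exp_mul_complex_Iic hp 0) hq_int,
    Set.compl_Iic, integral_exp_mul_complex_Iic hp, integral_exp_mul_complex_Ioi hq]
  simp [neg_div, sub_eq_add_neg]

theorem cexp_mul_exp_neg_mul_abs_eq_piecewise (a : ℝ) (z : ℂ) :
    (fun x : ℝ ↦ Complex.exp (z * x) * (exp (-(a * |x|)) : ℂ))
      = (Set.Iic 0).piecewise (fun x : ℝ ↦ Complex.exp ((z + a) * x))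
          fun x ↦ Complex.exp ((z - a) * x) := by
  ext x
  rcases le_or_gt x 0 with hx | hx
  · rw [Set.piecewise_eq_of_mem _ _ _ (Set.mem_Iic.2 hx), abs_of_nonpos hx, Complex.ofReal_exp,
      ← Complex.exp_add]
    push_cast
    ring_nf
  · rw [Set.piecewise_eq_of_notMem _ _ _ (Set.notMem_Iic.2 hx), abs_of_pos hx, Complex.ofReal_exp,
      ← Complex.exp_add]
    push_cast
    ring_nf

variable {a : ℝ}

theorem integral_exp_neg_mul_abs (ha : 0 < a) : ∫ x : ℝ, exp (-(a * |x|)) = 2 / a := by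
  simp only [← neg_mul]
  rw [integral_comp_abs (f := fun x ↦ exp (-a * x)), integral_exp_mul_Ioi (neg_neg_of_pos ha)]
  simp [div_eq_mul_inv]

theorem integrable_exp_neg_mul_abs (ha : 0 < a) : Integrable fun x : ℝ ↦ exp (-(a * |x|)) :=
  .of_integral_ne_zero <| by rw [integral_exp_neg_mul_abs ha]; positivity

theorem fourier_exp_neg_mul_abs (ha : 0 < a) (s : ℝ) :
    𝓕 (fun x : ℝ ↦ (exp (-(a * |x|)) : ℂ)) s = ((2 * a / (a ^ 2 + (2 * π * s) ^ 2) : ℝ) : ℂ) := by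
  set z : ℂ := -(2 * π * s * Complex.I) with hz
  have hz_sq : z ^ 2 = -(2 * π * s) ^ 2 := by
    rw [hz, neg_sq, mul_pow, Complex.I_sq, mul_neg_one]
  have hz_phase (x : ℝ) : ((-2 * π * x * s : ℝ) : ℂ) * Complex.I = z * x := by
    rw [hz]
    push_cast
    ring
  have hp : 0 < (z + a).re := by simpa [hz] using ha
  have hq : (z - a).re < 0 := by simpa [hz] using ha
  have hp₀ : z + a ≠ 0 := fun h ↦ by simp [h] at hp
  have hq₀ : z - a ≠ 0 := fun h ↦ by simp [h] at hq
  have h_denom : (a ^ 2 + (2 * π * s) ^ 2 : ℂ) = -((z + a) * (z - a)) := by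
    linear_combination hz_sq
  simp only [Real.fourier_real_eq_integral_exp_smul, hz_phase, smul_eq_mul]
  rw [cexp_mul_exp_neg_mul_abs_eq_piecewise, integral_piecewise_cexp hp hq]
  push_cast
  rw [h_denom]
  field_simp
  ring

end ExpNegAbs

theorem log_one_sub_exp_neg_eq_abs_sub_ite (x : ℝ) :
    log (1 - exp (-x)) = log (1 - exp (-|x|)) - if x < 0 then x else 0 := by
  split_ifs with h
  · have h_exp : exp x < 1 := exp_lt_one_iff.2 h
    have h_factor : 1 - exp (-x) = -(exp (-x) * (1 - exp x)) := by
      rw [mul_sub, ← exp_add]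
      simp
    rw [abs_of_neg h, neg_neg, h_factor, log_neg_eq_log, log_mul (exp_ne_zero _) (by linarith),
      log_exp]
    ring
  · rw [abs_of_nonneg (not_lt.1 h), sub_zero]

/-- The even extension `log (1 - exp (-(a * |x|)))` of minus the logarithm of the partition function
of a single bosonic mode at energy `x` and inverse temperature `a`. At `x = 0`, where the true value
is `-∞`, it is `log 0 = 0`. -/
noncomputable def boseLog (a x : ℝ) : ℝ := log (1 - exp (-(a * |x|)))

section BoseLog

variable {a x : ℝ}

theorem one_sub_exp_neg_mul_abs_pos (ha : 0 < a) (hx : x ≠ 0) : 0 < 1 - exp (-(a * |x|)) := by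
  rw [sub_pos, exp_lt_one_iff, neg_lt_zero]
  positivity

theorem continuousAt_boseLog (ha : 0 < a) (hx : x ≠ 0) : ContinuousAt (boseLog a) x :=
  ContinuousAt.log (by fun_prop) (one_sub_exp_neg_mul_abs_pos ha hx).ne'

/-- The term of index `n` of the expansion `log (1 - u) = -∑ u ^ (n + 1) / (n + 1)` of `boseLog a x`
at `u = exp (-(a * |x|))`, whose Fourier transform is elementary. -/
noncomputable def boseLogTerm (a : ℝ) (n : ℕ) (x : ℝ) : ℝ :=
  -(1 / (n + 1)) * exp (-((n + 1) * a * |x|))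

theorem hasSum_boseLogTerm (ha : 0 < a) (hx : x ≠ 0) :
    HasSum (fun n ↦ boseLogTerm a n x) (boseLog a x) := by
  have h_lt : |exp (-(a * |x|))| < 1 := by
    rw [abs_of_pos (exp_pos _)]
    exact sub_pos.1 (one_sub_exp_neg_mul_abs_pos ha hx)
  convert! (hasSum_pow_div_log_of_abs_lt_one h_lt).neg using 1
  · ext n
    rw [boseLogTerm, ← exp_nat_mul]
    push_cast
    ring_nf
  · rw [boseLog, neg_neg]

theorem ae_hasSum_boseLogTerm (ha : 0 < a) :
    ∀ᵐ x : ℝ, HasSum (fun n ↦ (boseLogTerm a n x : ℂ)) (boseLog a x) := by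
  filter_upwards [Measure.ae_ne volume (0 : ℝ)] with x hx
  exact Complex.hasSum_ofReal.2 (hasSum_boseLogTerm ha hx)

theorem integrable_boseLogTerm (ha : 0 < a) (n : ℕ) :
    Integrable fun x ↦ (boseLogTerm a n x : ℂ) :=
  ((integrable_exp_neg_mul_abs (by positivity)).const_mul _).ofReal

theorem integral_norm_boseLogTerm (ha : 0 < a) (n : ℕ) :
    ∫ x, ‖(boseLogTerm a n x : ℂ)‖ = 2 / a * (1 / ((n : ℝ) + 1) ^ 2) := by
  have h_norm (x : ℝ) :
      ‖(boseLogTerm a n x : ℂ)‖ = 1 / (n + 1) * exp (-((n + 1) * a * |x|)) := by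
    rw [Complex.norm_real, boseLogTerm, neg_mul, norm_neg, norm_of_nonneg (by positivity)]
  simp only [h_norm]
  rw [integral_const_mul, integral_exp_neg_mul_abs (by positivity)]
  field_simp

theorem summable_integral_norm_boseLogTerm (ha : 0 < a) :
    Summable fun n ↦ ∫ x, ‖(boseLogTerm a n x : ℂ)‖ := by
  simp only [integral_norm_boseLogTerm ha]
  refine .mul_left _ ?_
  exact_mod_cast (summable_nat_add_iff 1).2 (summable_one_div_nat_pow.2 one_lt_two)

theorem fourier_boseLogTerm (ha : 0 < a) (n : ℕ) (s : ℝ) :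
    𝓕 (fun x ↦ (boseLogTerm a n x : ℂ)) s
      = ((-(2 * a) / (((n : ℝ) + 1) ^ 2 * a ^ 2 + (2 * π * s) ^ 2) : ℝ) : ℂ) := by
  have h_smul : (fun x ↦ (boseLogTerm a n x : ℂ))
      = (-(1 / (n + 1)) : ℂ) • fun x : ℝ ↦ (exp (-((n + 1) * a * |x|)) : ℂ) := by
    ext x
    simp [boseLogTerm]
  have h_fourier := VectorFourier.fourierIntegral_const_smul 𝐞 volume (innerₗ ℝ)
    (fun x : ℝ ↦ (exp (-((n + 1) * a * |x|)) : ℂ)) (-(1 / (n + 1)))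
  rw [h_smul]
  refine (congrFun h_fourier s).trans ?_
  rw [Pi.smul_apply, smul_eq_mul]
  refine (congrArg _ (fourier_exp_neg_mul_abs (a := (n + 1) * a) (by positivity) s)).trans ?_
  norm_cast
  push_cast
  field_simp

theorem integrable_boseLog (ha : 0 < a) : Integrable fun x ↦ (boseLog a x : ℂ) :=
  integrable_of_ae_hasSum (integrable_boseLogTerm ha) (summable_integral_norm_boseLogTerm ha)
    (ae_hasSum_boseLogTerm ha)

theorem integrable_boseLog_sub {b : ℝ} (ha : 0 < a) (hb : 0 < b) :
    Integrable fun x ↦ ((boseLog a x - boseLog b x : ℝ) : ℂ) := by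
  simp only [Complex.ofReal_sub]
  exact (integrable_boseLog ha).sub (integrable_boseLog hb)

theorem fourier_boseLog {c : ℝ} (hc : 0 < c) (s : ℝ) :
    𝓕 (fun x ↦ (boseLog (2 * π * c) x : ℂ)) s = fFun c s := by
  have ha : 0 < 2 * π * c := by positivity
  have h_sum := hasSum_fourier_of_ae_hasSum (integrable_boseLogTerm ha)
    (summable_integral_norm_boseLogTerm ha) (ae_hasSum_boseLogTerm ha) s
  simp only [fourier_boseLogTerm ha] at h_sum
  rw [← h_sum.tsum_eq, ← Complex.ofReal_tsum, fFun, ← tsum_mul_left]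
  congr 2 with n
  have h_denom : ((n : ℝ) + 1) ^ 2 * (2 * π * c) ^ 2 + (2 * π * s) ^ 2
      = (2 * π) ^ 2 * (((n : ℝ) + 1) ^ 2 * c ^ 2 + s ^ 2) := by ring
  rw [h_denom]
  field_simp

theorem fourier_boseLog_sub {c d : ℝ} (hc : 0 < c) (hd : 0 < d) :
    𝓕 (fun x ↦ ((boseLog (2 * π * c) x - boseLog (2 * π * d) x : ℝ) : ℂ))
      = fun s ↦ ((fFun c s - fFun d s : ℝ) : ℂ) := by
  simp only [Complex.ofReal_sub]
  ext s
  rw [← fourier_boseLog hc, ← fourier_boseLog hd]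
  exact fourier_sub_apply (integrable_boseLog (by positivity))
    (integrable_boseLog (by positivity)) s

end BoseLog

section FFun

variable {c d s E : ℝ}

theorem tsum_one_div_add_one_sq_add_sq {x : ℝ} (hx : x ≠ 0) :
    ∑' n : ℕ, 1 / (((n : ℝ) + 1) ^ 2 + x ^ 2)
      = π / (2 * x) * (cosh (π * x) / sinh (π * x)) - 1 / (2 * x ^ 2) := by
  have hxI : (x * Complex.I : ℂ) ∈ Complex.integerComplement := by
    rintro ⟨n, hn⟩
    exact hx (by simpa using (congrArg Complex.im hn).symm)
  have h_term (n : ℕ) : 1 / (x * Complex.I - (n + 1)) + 1 / (x * Complex.I + (n + 1))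
      = -(2 * x * Complex.I) * ((1 / (((n : ℝ) + 1) ^ 2 + x ^ 2) : ℝ) : ℂ) := by
    have h_denom : (((n : ℝ) + 1) ^ 2 + x ^ 2 : ℂ)
        = -((x * Complex.I + (n + 1)) * (x * Complex.I - (n + 1))) := by
      push_cast
      linear_combination (x : ℂ) ^ 2 * Complex.I_sq
    refine (cotTerm_identity hxI n).trans ?_
    push_cast at h_denom ⊢
    rw [h_denom, div_neg]
    ring
  have hx₀ : (x : ℂ) ≠ 0 := Complex.ofReal_ne_zero.2 hx
  have h_sinh : sinh (π * x) ≠ 0 := by simp [hx, pi_ne_zero]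
  have h_sinh' : (sinh (π * x) : ℂ) ≠ 0 := Complex.ofReal_ne_zero.2 h_sinh
  have h_cot := cot_series_rep' hxI
  simp only [h_term] at h_cot
  rw [tsum_mul_left, ← Complex.ofReal_tsum, Complex.cot_eq_cos_div_sin, ← mul_assoc,
    ← Complex.ofReal_mul, Complex.cos_mul_I, Complex.sin_mul_I, ← Complex.ofReal_cosh,
    ← Complex.ofReal_sinh] at h_cot
  rw [← Complex.ofReal_inj]
  push_cast [-Complex.ofReal_cosh, -Complex.ofReal_sinh, -Complex.ofReal_tsum]
  field_simp at h_cot ⊢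
  rw [Complex.I_sq] at h_cot
  linear_combination (-1) * h_cot

theorem fFun_eq_sub_coth (hc : c ≠ 0) (hs : s ≠ 0) :
    fFun c s = c / (2 * π * s ^ 2) - cosh (π * s / c) / sinh (π * s / c) / (2 * s) := by
  have h_term (n : ℕ) : 1 / (((n : ℝ) + 1) ^ 2 * c ^ 2 + s ^ 2)
      = 1 / c ^ 2 * (1 / (((n : ℝ) + 1) ^ 2 + (s / c) ^ 2)) := by
    field_simp
  simp only [fFun, h_term]
  rw [tsum_mul_left, tsum_one_div_add_one_sq_add_sq (div_ne_zero hs hc), ← mul_div_assoc]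
  field_simp
  ring

theorem cosh_div_sinh_mem_Icc {u : ℝ} (hu : 0 < u) :
    cosh u / sinh u ∈ Set.Icc 1 (1 + 1 / u) := by
  have h_sinh : 0 < sinh u := sinh_pos_iff.2 hu
  refine ⟨(one_le_div h_sinh).2 (sinh_lt_cosh u).le, ?_⟩
  have h_le : u * exp (-u) ≤ sinh u := by
    calc u * exp (-u) ≤ u * 1 := by gcongr; exact exp_le_one_iff.2 (by linarith)
      _ ≤ sinh u := by rw [mul_one]; exact self_le_sinh_iff.2 hu.le
  rw [← cosh_sub_sinh] at h_le
  rw [div_le_iff₀ h_sinh]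
  field_simp
  linarith

theorem fFun_add_one_div_mem_Icc (hc : 0 < c) (hs : 0 < s) :
    fFun c s + 1 / (2 * s) ∈ Set.Icc 0 (c / (2 * π) / s ^ 2) := by
  obtain ⟨h_one_le, h_le⟩ := cosh_div_sinh_mem_Icc (u := π * s / c) (by positivity)
  set coth := cosh (π * s / c) / sinh (π * s / c)
  have h_eq : fFun c s + 1 / (2 * s) = c / (2 * π * s ^ 2) - (coth - 1) / (2 * s) := by
    rw [fFun_eq_sub_coth hc.ne' hs.ne']
    ring
  have h_coth : (coth - 1) / (2 * s) ≤ c / (2 * π * s ^ 2) := by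
    calc (coth - 1) / (2 * s) ≤ 1 / (π * s / c) / (2 * s) := by gcongr; linarith
      _ = c / (2 * π * s ^ 2) := by field_simp
  rw [h_eq, div_div]
  exact ⟨by linarith, sub_le_self _ (div_nonneg (by linarith) (by positivity))⟩

theorem fFun_abs (c s : ℝ) : fFun c |s| = fFun c s := by
  simp only [fFun, sq_abs]

theorem abs_fFun_sub_mul_sq_le (hc : 0 < c) (hd : 0 < d) (s : ℝ) :
    |fFun c s - fFun d s| * s ^ 2 ≤ max c d / (2 * π) := by
  rcases eq_or_ne s 0 with rfl | hs
  · rw [zero_pow two_ne_zero, mul_zero]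
    positivity
  have hs_abs := abs_pos.2 hs
  obtain ⟨hc₀, hc₁⟩ := fFun_add_one_div_mem_Icc hc hs_abs
  obtain ⟨hd₀, hd₁⟩ := fFun_add_one_div_mem_Icc hd hs_abs
  rw [fFun_abs] at hc₀ hc₁ hd₀ hd₁
  rw [sq_abs] at hc₁ hd₁
  rw [← le_div_iff₀ (by positivity), ← add_sub_add_right_eq_sub _ _ (1 / (2 * |s|))]
  refine abs_sub_le_of_nonneg_of_le hc₀ (hc₁.trans ?_) hd₀ (hd₁.trans ?_) <;> gcongr
  exacts [le_max_left c d, le_max_right c d]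

theorem integrable_fFun_sub (hc : 0 < c) (hd : 0 < d) :
    Integrable fun s ↦ ((fFun c s - fFun d s : ℝ) : ℂ) := by
  rw [← fourier_boseLog_sub hc hd]
  refine integrable_fourier_of_norm_mul_sq_le (B := max c d / (2 * π))
    (integrable_boseLog_sub (by positivity) (by positivity)) fun s ↦ ?_
  rw [fourier_boseLog_sub hc hd, Complex.norm_real]
  exact abs_fFun_sub_mul_sq_le hc hd s

theorem integral_exp_mul_fFun_sub (hc : 0 < c) (hd : 0 < d) (hE : E ≠ 0) :
    ∫ s : ℝ, Complex.exp (-(Complex.I * E * s)) * ((fFun c s - fFun d s : ℝ) : ℂ)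
      = ((boseLog c E - boseLog d E : ℝ) : ℂ) := by
  have h_freq : -E / (2 * π) ≠ 0 := div_ne_zero (neg_ne_zero.2 hE) two_pi_pos.ne'
  have h_cont : ContinuousAt
      (fun x ↦ ((boseLog (2 * π * c) x - boseLog (2 * π * d) x : ℝ) : ℂ)) (-E / (2 * π)) :=
    Complex.continuous_ofReal.continuousAt.comp
      ((continuousAt_boseLog (by positivity) h_freq).sub
        (continuousAt_boseLog (by positivity) h_freq))
  have h_rescale (c : ℝ) : boseLog (2 * π * c) (-E / (2 * π)) = boseLog c E := by
    simp only [boseLog, abs_div, abs_neg, abs_of_pos two_pi_pos]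
    field_simp
  have h_phase (s : ℝ) :
      -(Complex.I * E * s) = ((2 * π * (-E / (2 * π) * s) : ℝ) : ℂ) * Complex.I := by
    rw [show 2 * π * (-E / (2 * π) * s) = -(E * s) by field_simp]
    push_cast
    ring
  have h_inv := (integrable_boseLog_sub (by positivity) (by positivity)).fourierInv_fourier_eq
    (fourier_boseLog_sub hc hd ▸ integrable_fFun_sub hc hd) h_cont
  rw [Real.fourierInv_eq', fourier_boseLog_sub hc hd, h_rescale, h_rescale] at h_inv
  simp only [h_phase]
  exact h_inv

theorem log_one_sub_exp_neg_mul_eq_boseLog_sub (hc : 0 < c) (E : ℝ) :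
    log (1 - exp (-(c * E))) = boseLog c E - c * (E * if E < 0 then 1 else 0) := by
  rw [log_one_sub_exp_neg_eq_abs_sub_ite, boseLog, abs_mul, abs_of_pos hc]
  simp [mul_neg_iff, hc, hc.not_gt]

theorem integral_exp_mul_fFun_sub_eq_log (hc : 0 < c) (hd : 0 < d) (hE : E ≠ 0) :
    ∫ s : ℝ, Complex.exp (-(Complex.I * E * s)) * ((fFun c s - fFun d s : ℝ) : ℂ)
      = ((log ((1 - exp (-(c * E))) / (1 - exp (-(d * E))))
          + (c - d) * (E * if E < 0 then 1 else 0) : ℝ) : ℂ) := by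
  have h_ne {c : ℝ} (hc : 0 < c) : 1 - exp (-(c * E)) ≠ 0 := by
    simpa [sub_eq_zero, eq_comm (a := (1 : ℝ))] using ⟨hc.ne', hE⟩
  rw [integral_exp_mul_fFun_sub hc hd hE, log_div (h_ne hc) (h_ne hd),
    log_one_sub_exp_neg_mul_eq_boseLog_sub hc, log_one_sub_exp_neg_mul_eq_boseLog_sub hd]
  ring_nf

end FFun

/-- Transition rate of an Unruh–DeWitt detector moving with constant
velocity `v` through a `β`-KMS heat bath: with `γ = 1/√(1−v²)`, `d₊ = γ(1+v)`,
`d₋ = γ(1−v)` and `w̃_{β,v}(s) = (1/(4πβγv))·(f_{βd₊}(s) − f_{βd₋}(s))`, for `E ≠ 0`,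
`∫_ℝ e^{−iEs} w̃_{β,v}(s) ds − (E/(2π))·Θ(−E)
  = (1/(4πβγv))·ln((1 − e^{−βd₊E})/(1 − e^{−βd₋E}))`. -/
theorem stmt7 (β v E γ dp dm : ℝ) (hβ : 0 < β) (hv1 : -1 < v) (hv2 : v < 1) (hv0 : v ≠ 0)
    (hE : E ≠ 0) (hγ : γ = 1 / Real.sqrt (1 - v ^ 2))
    (hdp : dp = γ * (1 + v)) (hdm : dm = γ * (1 - v)) :
    (∫ s : ℝ, Complex.exp (-(Complex.I * E * s)) *
        (((1 / (4 * π * β * γ * v)) * (fFun (β * dp) s - fFun (β * dm) s) : ℝ) : ℂ))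
      - (((E / (2 * π)) * (if E < 0 then 1 else 0) : ℝ) : ℂ)
      = (((1 / (4 * π * β * γ * v)) *
          Real.log ((1 - Real.exp (-(β * dp * E))) / (1 - Real.exp (-(β * dm * E)))) : ℝ) : ℂ) := by
  have hγ_pos : 0 < γ := by
    rw [hγ]
    have : 0 < 1 - v ^ 2 := by nlinarith
    positivity
  have hc : 0 < β * dp := by rw [hdp]; exact mul_pos hβ (mul_pos hγ_pos (by linarith))
  have hd : 0 < β * dm := by rw [hdm]; exact mul_pos hβ (mul_pos hγ_pos (by linarith))
  have h_vacuum : 1 / (4 * π * β * γ * v) * (β * dp - β * dm) = 1 / (2 * π) := by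
    rw [hdp, hdm]
    field_simp
    ring
  simp only [Complex.ofReal_mul (1 / _), mul_left_comm (Complex.exp _)]
  rw [integral_const_mul, integral_exp_mul_fFun_sub_eq_log hc hd hE, ← Complex.ofReal_mul,
    ← Complex.ofReal_mul, ← Complex.ofReal_sub]
  congr 1
  linear_combination (E * if E < 0 then 1 else 0) * h_vacuum
end

section
/- Let β_L, β_R > 0. For every E ∈ ℝ with E ≠ 0: ∫_ℝ e^{−i E s}·(1/(4π²))·(C_{β_L}(s) + C_{β_R}(s)) ds = (1/(4π))·(|E|/(e^{β_L|E|} − 1) + |E|/(e^{β_R|E|} − 1)). Consequently the transition rate of an Unruh–DeWitt detector at rest in the NESS, which equals this Fourier transform plus the vacuum rate −(E/(2π))·Θ(−E), is the arithmetic mean (1/2)·(𝓡₀^{(β_L)}(E) + 𝓡₀^{(β_R)}(E)) of the two Planckian rates 𝓡₀^{(β)}(E) := (1/(2π))·E/(e^{βE} − 1). -/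
open MeasureTheory Real

/-- The function `C_β(s) = 1/(2s²) − (π²/(2β²))/sinh²(π s/β)` for `s ≠ 0`, extended
continuously by `C_β(0) := π²/(6β²)`. -/
noncomputable def Cfun (β s : ℝ) : ℝ :=
  if s = 0 then π ^ 2 / (6 * β ^ 2)
  else 1 / (2 * s ^ 2) - (π ^ 2 / (2 * β ^ 2)) / Real.sinh (π * s / β) ^ 2

/-- The Planckian transition rate `𝓡₀^{(β)}(E) = (1/(2π))·E/(e^{βE} − 1)`. -/
noncomputable def planckRate (β E : ℝ) : ℝ := (1 / (2 * π)) * (E / (Real.exp (β * E) - 1))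

/-!
Expand the Planck spectrum as a geometric series,
`|v| / (e^{β|v|} − 1) = ∑_{m ≥ 1} |v| e^{−mβ|v|}`. The Fourier transform of the `m`-th term is
`1 / (mβ + is)² + 1 / (mβ − is)²`, and by the Mittag-Leffler expansion of `π² / sin²(πz)` at
`z = is/β` these sum to `2 C_β(s)`: the double pole at `s = 0` is exactly the missing term `m = 0`.
Going in this direction makes every interchange absolutely convergent, and Fourier inversion then
gives the transform of `C_β`. The vacuum rate accounts for the reflection
`E / (e^{βE} − 1) = |E| / (e^{β|E|} − 1) − E` at `E < 0`.
-/

open Filter Topology FourierTransform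
open scoped Nat

section LaplaceTransform

variable (n : ℕ) {c : ℂ}

lemma tendsto_pow_mul_cexp_neg_mul_atTop (hc : 0 < c.re) :
    Tendsto (fun x : ℝ => (x : ℂ) ^ n * Complex.exp (-(c * x))) atTop (𝓝 0) := by
  rw [tendsto_zero_iff_norm_tendsto_zero]
  refine (tendsto_rpow_mul_exp_neg_mul_atTop_nhds_zero n c.re hc).congr' ?_
  filter_upwards [eventually_ge_atTop 0] with x hx
  simp [Complex.norm_exp, abs_of_nonneg hx]

lemma integrableOn_pow_mul_cexp_neg_mul_Ioi (hc : 0 < c.re) :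
    IntegrableOn (fun x : ℝ => (x : ℂ) ^ n * Complex.exp (-(c * x))) (Set.Ioi 0) := by
  have h := integrableOn_rpow_mul_exp_neg_mul_rpow (s := n) (p := 1)
    (neg_one_lt_zero.trans_le n.cast_nonneg) one_pos hc
  refine h.mono' (by fun_prop) ?_
  filter_upwards [ae_restrict_mem measurableSet_Ioi] with x (hx : 0 < x)
  simp [Complex.norm_exp, abs_of_pos hx]

lemma integral_pow_mul_cexp_neg_mul_Ioi (hc : 0 < c.re) :
    ∫ x in Set.Ioi (0 : ℝ), (x : ℂ) ^ n * Complex.exp (-(c * x)) = n ! / c ^ (n + 1) := by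
  have hc0 : c ≠ 0 := fun h => by simp [h] at hc
  have hderiv_exp (x : ℝ) :
      HasDerivAt (fun x : ℝ => Complex.exp (-(c * x))) (Complex.exp (-(c * x)) * -c) x := by
    simpa using (((hasDerivAt_id (x : ℂ)).const_mul c).neg.cexp).comp_ofReal
  induction n with
  | zero =>
    have h := integral_exp_mul_complex_Ioi (a := -c) (by simpa using hc) 0
    simpa [neg_div_neg_eq] using h
  | succ n ih =>
    have hderiv (x : ℝ) : HasDerivAt (fun x : ℝ => (x : ℂ) ^ (n + 1) * Complex.exp (-(c * x)))
        ((n + 1) * ((x : ℂ) ^ n * Complex.exp (-(c * x)))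
          - c * ((x : ℂ) ^ (n + 1) * Complex.exp (-(c * x)))) x := by
      refine ((hasDerivAt_pow (n + 1) (x : ℂ)).comp_ofReal.mul (hderiv_exp x)).congr_deriv ?_
      push_cast
      ring
    have hint := (integrableOn_pow_mul_cexp_neg_mul_Ioi n hc).const_mul (n + 1 : ℂ)
    have hint' := (integrableOn_pow_mul_cexp_neg_mul_Ioi (n + 1) hc).const_mul c
    have hparts := integral_Ioi_of_hasDerivAt_of_tendsto' (a := 0) (fun x _ => hderiv x)
      (hint.sub hint') (tendsto_pow_mul_cexp_neg_mul_atTop (n + 1) hc)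
    rw [integral_sub hint hint', integral_const_mul, integral_const_mul, ih] at hparts
    simp only [Complex.ofReal_zero, zero_pow n.succ_ne_zero, zero_mul, sub_zero] at hparts
    rw [Nat.factorial_succ, Nat.cast_mul, Nat.cast_succ, pow_succ c (n + 1), ← div_div,
      eq_div_iff hc0, mul_div_assoc]
    linear_combination -hparts

end LaplaceTransform

section FourierTransform

variable {V : Type*} [NormedAddCommGroup V] [NormedSpace ℂ V]

lemma norm_cexp_neg_I_mul_mul (E s : ℝ) : ‖Complex.exp (-(Complex.I * E * s))‖ = 1 := by
  simp [Complex.norm_exp]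

lemma norm_integral_cexp_neg_I_mul_smul_le (f : ℝ → V) (E : ℝ) :
    ‖∫ s : ℝ, Complex.exp (-(Complex.I * E * s)) • f s‖ ≤ ∫ s : ℝ, ‖f s‖ := by
  refine (norm_integral_le_integral_norm _).trans_eq ?_
  simp only [norm_smul, norm_cexp_neg_I_mul_mul, one_mul]

lemma integrable_cexp_neg_I_mul_smul {f : ℝ → V} (hf : Integrable f) (E : ℝ) :
    Integrable (fun s : ℝ => Complex.exp (-(Complex.I * E * s)) • f s) := by
  refine hf.norm.mono' (AEStronglyMeasurable.smul (by fun_prop) hf.1) (ae_of_all _ fun s => ?_)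
  rw [norm_smul, norm_cexp_neg_I_mul_mul, one_mul]

/- Substituting `s = 2πw` turns Mathlib's Fourier transform, with kernel `e^{−2πiwv}`, into the
one in angular frequency. -/
theorem integral_cexp_neg_I_mul_smul_eq_two_pi_smul [CompleteSpace V] {f g : ℝ → V}
    (hf : Integrable f) (hg : Integrable g)
    (hfg : ∀ᵐ s : ℝ, ∫ v : ℝ, Complex.exp (-(Complex.I * s * v)) • f v = g s)
    {E : ℝ} (hcont : ContinuousAt f (-E)) :
    ∫ s : ℝ, Complex.exp (-(Complex.I * E * s)) • g s = (2 * π) • f (-E) := by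
  have hpi : 2 * π ≠ 0 := by positivity
  have hF : 𝓕 f =ᵐ[volume] fun w => g (2 * π * w) := by
    filter_upwards [(Measure.quasiMeasurePreserving_smul volume hpi).ae hfg] with w hw
    rw [Real.fourier_real_eq_integral_exp_smul, ← smul_eq_mul (2 * π), ← hw]
    congr! 4
    push_cast [smul_eq_mul]
    ring
  have hFint : Integrable (𝓕 f) := (hg.comp_mul_left' hpi).congr hF.symm
  have hinv : ∫ w : ℝ, Complex.exp (-(Complex.I * E * (2 * π * w : ℝ))) • g (2 * π * w)
      = f (-E) := by
    rw [← hf.fourierInv_fourier_eq hFint hcont, Real.fourierInv_eq']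
    refine integral_congr_ae ?_
    filter_upwards [hF] with w hw
    rw [hw]
    congr 2
    simp only [Complex.ofReal_mul, Complex.ofReal_ofNat, RCLike.inner_apply, conj_trivial, neg_mul,
      mul_neg, Complex.ofReal_neg, neg_inj]
    ring
  rw [← hinv, Measure.integral_comp_mul_left
    (fun s : ℝ => Complex.exp (-(Complex.I * E * s)) • g s), smul_smul,
    abs_of_pos (by positivity), mul_inv_cancel₀ hpi, one_smul]

end FourierTransform

section TwoSidedExponential

variable (n : ℕ) {a : ℝ}

lemma integrable_abs_pow_mul_exp_neg_mul_abs (ha : 0 < a) :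
    Integrable (fun v : ℝ => |v| ^ n * Real.exp (-(a * |v|))) := by
  have h := integrableOn_rpow_mul_exp_neg_mul_rpow (s := n) (p := 1)
    (neg_one_lt_zero.trans_le n.cast_nonneg) one_pos ha
  simp only [rpow_natCast, rpow_one, neg_mul] at h
  refine (integrable_fun_norm_addHaar (E := ℝ) volume
    (f := fun x => x ^ n * Real.exp (-(a * x)))).2 ?_
  simpa using h

theorem integral_cexp_mul_abs_pow_mul_exp_neg_mul_abs (ha : 0 < a) (θ : ℝ) :
    ∫ v : ℝ, Complex.exp (-(Complex.I * θ * v)) * ((|v| ^ n * Real.exp (-(a * |v|)) : ℝ) : ℂ)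
      = n ! / (a + Complex.I * θ) ^ (n + 1) + n ! / (a - Complex.I * θ) ^ (n + 1) := by
  have hint : Integrable fun v : ℝ => Complex.exp (-(Complex.I * θ * v)) *
      ((|v| ^ n * Real.exp (-(a * |v|)) : ℝ) : ℂ) :=
    integrable_cexp_neg_I_mul_smul (integrable_abs_pow_mul_exp_neg_mul_abs n ha).ofReal θ
  rw [← intervalIntegral.integral_Iic_add_Ioi (b := 0) hint.integrableOn hint.integrableOn,
    ← neg_zero, ← integral_comp_neg_Ioi, neg_zero, add_comm,
    ← integral_pow_mul_cexp_neg_mul_Ioi n (c := a + Complex.I * θ) (by simpa using ha),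
    ← integral_pow_mul_cexp_neg_mul_Ioi n (c := a - Complex.I * θ) (by simpa using ha)]
  congr 1 <;> refine setIntegral_congr_fun measurableSet_Ioi fun v (hv : 0 < v) => ?_
  all_goals
    simp only [abs_neg, abs_of_pos hv]
    push_cast
    rw [mul_left_comm, ← Complex.exp_add]
    ring_nf

end TwoSidedExponential

section MittagLeffler

lemma cexp_div_one_sub_cexp_sq (z : ℂ) :
    Complex.exp (2 * π * Complex.I * z) / (1 - Complex.exp (2 * π * Complex.I * z)) ^ 2
      = -(1 / (4 * Complex.sin (π * z) ^ 2)) := by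
  have hq : Complex.exp (2 * π * Complex.I * z) = Complex.exp (π * z * Complex.I) ^ 2 := by
    rw [← Complex.exp_nat_mul]; push_cast; ring_nf
  have hinv : Complex.exp (π * z * Complex.I) * Complex.exp (-(π * z) * Complex.I) = 1 := by
    rw [← Complex.exp_add, neg_mul, add_neg_cancel, Complex.exp_zero]
  have hsin : 1 - Complex.exp (2 * π * Complex.I * z)
      = -2 * Complex.I * Complex.sin (π * z) * Complex.exp (π * z * Complex.I) := by
    rw [Complex.sin, hq]
    linear_combination (Complex.exp (-(π * z) * Complex.I) * Complex.exp (π * z * Complex.I)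
      - Complex.exp (π * z * Complex.I) ^ 2) * Complex.I_sq - hinv
  have hne := Complex.exp_ne_zero (π * z * Complex.I)
  rw [hsin, hq, mul_pow, mul_pow, mul_pow, Complex.I_sq]
  rcases eq_or_ne (Complex.sin (π * z)) 0 with h0 | h0
  · simp [h0]
  · field_simp
    norm_num

lemma hasSum_int_one_div_add_sq_of_im_pos {z : ℂ} (hz : 0 < z.im) :
    HasSum (fun n : ℤ => 1 / (z + n) ^ 2) (π ^ 2 / Complex.sin (π * z) ^ 2) := by
  have hsummable : Summable fun n : ℤ => 1 / (z + n) ^ 2 := by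
    refine (EisensteinSeries.linear_right_summable z 1 le_rfl).congr fun n => ?_
    rw [Int.cast_one, one_mul, one_div]
    norm_cast
  have hnorm : ‖Complex.exp (2 * π * Complex.I * z)‖ < 1 :=
    UpperHalfPlane.norm_exp_two_pi_I_lt_one ⟨z, hz⟩
  have hq := EisensteinSeries.qExpansion_identity (k := 1) le_rfl ⟨z, hz⟩
  simp only [pow_one, one_add_one_eq_two] at hq
  rw [tsum_coe_mul_geometric_of_norm_lt_one hnorm, cexp_div_one_sub_cexp_sq] at hq
  refine hsummable.hasSum_iff.2 (hq.trans ?_)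
  rw [mul_pow, Complex.I_sq, Nat.factorial_one, Nat.cast_one]
  ring

lemma hasSum_int_one_div_add_sq {z : ℂ} (hz : z.im ≠ 0) :
    HasSum (fun n : ℤ => 1 / (z + n) ^ 2) (π ^ 2 / Complex.sin (π * z) ^ 2) := by
  rcases hz.lt_or_gt with hneg | hpos
  · have h := hasSum_int_one_div_add_sq_of_im_pos (z := -z) (by simpa using hneg)
    rw [mul_neg, Complex.sin_neg, neg_sq] at h
    convert! (Equiv.neg ℤ).hasSum_iff.2 h using 2 with n
    simp only [Function.comp_apply, Equiv.neg_apply]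
    push_cast
    ring
  · exact hasSum_int_one_div_add_sq_of_im_pos hpos

theorem hasSum_nat_one_div_add_sq_add_one_div_sub_sq {z : ℂ} (hz : z.im ≠ 0) :
    HasSum (fun n : ℕ => 1 / (z + (n + 1)) ^ 2 + 1 / (z - (n + 1)) ^ 2)
      (π ^ 2 / Complex.sin (π * z) ^ 2 - 1 / z ^ 2) := by
  have h := (hasSum_nat_add_iff' 1).2 (hasSum_int_one_div_add_sq hz).nat_add_neg
  convert! h using 1
  · funext n
    push_cast
    rw [sub_eq_add_neg]
  · rw [Finset.sum_range_one]
    push_cast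
    ring

end MittagLeffler

/-- The even extension `|v| / (e^{β|v|} − 1)` of the Bose–Einstein energy density at inverse
temperature `β`. Its value at `v = 0` is `0 / 0 = 0`, not the continuous extension `1 / β`. -/
noncomputable def planckSpectrum (β v : ℝ) : ℝ := |v| / (Real.exp (β * |v|) - 1)

namespace planckSpectrum

variable {β : ℝ}

lemma neg (β v : ℝ) : planckSpectrum β (-v) = planckSpectrum β v := by
  simp only [planckSpectrum, abs_neg]

lemma nonneg (hβ : 0 ≤ β) (v : ℝ) : 0 ≤ planckSpectrum β v :=
  div_nonneg (abs_nonneg v) (sub_nonneg.2 (Real.one_le_exp (by positivity)))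

lemma denom_pos (hβ : 0 < β) {v : ℝ} (hv : v ≠ 0) : 0 < Real.exp (β * |v|) - 1 :=
  sub_pos.2 (Real.one_lt_exp_iff.2 (by positivity))

lemma hasSum (hβ : 0 < β) (v : ℝ) :
    HasSum (fun n : ℕ => |v| * Real.exp (-(β * (n + 1) * |v|))) (planckSpectrum β v) := by
  rcases eq_or_ne v 0 with rfl | hv
  · simp [planckSpectrum]
  have hlt : Real.exp (-(β * |v|)) < 1 := Real.exp_lt_one_iff.2 (neg_neg_of_pos (by positivity))
  have h := (hasSum_geometric_of_lt_one (Real.exp_pos _).le hlt).mul_left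
    (|v| * Real.exp (-(β * |v|)))
  convert! h using 1
  · funext n
    rw [mul_assoc |v|, ← Real.exp_nat_mul, ← Real.exp_add]
    ring_nf
  · have hexp : Real.exp (-(β * |v|)) * (Real.exp (β * |v|) - 1) = 1 - Real.exp (-(β * |v|)) := by
      rw [mul_sub, ← Real.exp_add, neg_add_cancel, Real.exp_zero, mul_one]
    rw [planckSpectrum, ← hexp, mul_inv, mul_assoc, mul_inv_cancel_left₀ (Real.exp_ne_zero _),
      div_eq_mul_inv]

lemma le_inv_mul_exp (hβ : 0 < β) (v : ℝ) :
    planckSpectrum β v ≤ β⁻¹ * Real.exp (-(β / 2 * |v|)) := by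
  rcases eq_or_ne v 0 with rfl | hv
  · simp [planckSpectrum, hβ.le]
  have hsinh : β / 2 * |v| ≤ Real.sinh (β / 2 * |v|) := Real.self_le_sinh_iff.2 (by positivity)
  have hexp : Real.exp (-(β / 2 * |v|)) * (Real.exp (β * |v|) - 1)
      = 2 * Real.sinh (β / 2 * |v|) := by
    rw [mul_sub, ← Real.exp_add, Real.sinh_eq]
    ring_nf
  rw [planckSpectrum, div_le_iff₀ (denom_pos hβ hv), mul_assoc, hexp, ← div_eq_inv_mul,
    le_div_iff₀ hβ]
  linarith

lemma integrable (hβ : 0 < β) : Integrable (planckSpectrum β) := by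
  have hmeas : Measurable (planckSpectrum β) := by unfold planckSpectrum; fun_prop
  have hbound := (integrable_abs_pow_mul_exp_neg_mul_abs 0 (half_pos hβ)).const_mul β⁻¹
  simp only [pow_zero, one_mul] at hbound
  refine hbound.mono' hmeas.aestronglyMeasurable (ae_of_all _ fun v => ?_)
  rw [Real.norm_of_nonneg (nonneg hβ.le v)]
  exact le_inv_mul_exp hβ v

lemma continuousAt (hβ : 0 < β) {v : ℝ} (hv : v ≠ 0) : ContinuousAt (planckSpectrum β) v :=
  ContinuousAt.div (by fun_prop) (by fun_prop) (denom_pos hβ hv).ne'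

end planckSpectrum

namespace Cfun

variable {β s : ℝ}

lemma hasSum (hβ : β ≠ 0) (hs : s ≠ 0) :
    HasSum (fun n : ℕ => 1 / ((β * (n + 1) : ℝ) + Complex.I * s) ^ 2
      + 1 / ((β * (n + 1) : ℝ) - Complex.I * s) ^ 2) ((2 * Cfun β s : ℝ) : ℂ) := by
  have hβ' : (β : ℂ) ≠ 0 := Complex.ofReal_ne_zero.2 hβ
  have h := (hasSum_nat_one_div_add_sq_add_one_div_sub_sq (z := (s / β : ℝ) * Complex.I)
    (by simp [hs, hβ])).mul_left (1 / (β : ℂ) ^ 2)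
  convert! h using 1
  · funext n
    have hadd : (β * (n + 1) : ℝ) + Complex.I * s
        = β * ((s / β : ℝ) * Complex.I + (n + 1)) := by
      push_cast; field_simp; ring
    have hsub : (β * (n + 1) : ℝ) - Complex.I * s
        = -(β * ((s / β : ℝ) * Complex.I - (n + 1))) := by
      push_cast; field_simp; ring
    rw [hadd, hsub, neg_sq, mul_pow, mul_pow, ← one_div_mul_one_div, ← one_div_mul_one_div,
      ← mul_add]
  · rw [← mul_assoc, Complex.sin_mul_I, mul_pow, mul_pow, Complex.I_sq, Cfun, if_neg hs]
    push_cast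
    field_simp
    ring

lemma nonneg (β s : ℝ) : 0 ≤ Cfun β s := by
  rcases eq_or_ne s 0 with rfl | hs
  · rw [Cfun, if_pos rfl]; positivity
  rcases eq_or_ne β 0 with rfl | hβ
  · simpa [Cfun, hs] using sq_nonneg s
  have hsinh : (π * s / β) ^ 2 ≤ Real.sinh (π * s / β) ^ 2 := by
    rw [sq_le_sq, Real.abs_sinh]
    exact Real.self_le_sinh_iff.2 (abs_nonneg _)
  rw [Cfun, if_neg hs, sub_nonneg]
  calc (π ^ 2 / (2 * β ^ 2)) / Real.sinh (π * s / β) ^ 2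
      ≤ (π ^ 2 / (2 * β ^ 2)) / (π * s / β) ^ 2 := by gcongr
    _ = 1 / (2 * s ^ 2) := by field_simp

lemma mul_sq_le_half (β s : ℝ) : Cfun β s * s ^ 2 ≤ 1 / 2 := by
  rcases eq_or_ne s 0 with rfl | hs
  · simp
  rw [Cfun, if_neg hs]
  calc (1 / (2 * s ^ 2) - (π ^ 2 / (2 * β ^ 2)) / Real.sinh (π * s / β) ^ 2) * s ^ 2
      ≤ 1 / (2 * s ^ 2) * s ^ 2 := by gcongr; exact sub_le_self _ (by positivity)
    _ = 1 / 2 := by field_simp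

end Cfun

theorem integral_cexp_mul_planckSpectrum {β s : ℝ} (hβ : 0 < β) (hs : s ≠ 0) :
    ∫ v : ℝ, Complex.exp (-(Complex.I * s * v)) * (planckSpectrum β v : ℂ)
      = ((2 * Cfun β s : ℝ) : ℂ) := by
  set mode : ℕ → ℝ → ℝ := fun n v => |v| * Real.exp (-(β * (n + 1) * |v|))
  have hinterchange : HasSum
      (fun n => ∫ v : ℝ, Complex.exp (-(Complex.I * s * v)) * (mode n v : ℂ))
      (∫ v : ℝ, Complex.exp (-(Complex.I * s * v)) * (planckSpectrum β v : ℂ)) := by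
    refine hasSum_integral_of_dominated_convergence mode (fun n => by fun_prop)
      (fun n => ae_of_all _ fun v => ?_)
      (ae_of_all _ fun v => (planckSpectrum.hasSum hβ v).summable) ?_
      (ae_of_all _ fun v => (Complex.hasSum_ofReal.2 (planckSpectrum.hasSum hβ v)).mul_left _)
    · rw [norm_mul, norm_cexp_neg_I_mul_mul, one_mul, Complex.norm_of_nonneg (by positivity)]
    · exact (planckSpectrum.integrable hβ).congr
        (ae_of_all _ fun v => (planckSpectrum.hasSum hβ v).tsum_eq.symm)
  refine hinterchange.unique ?_
  convert! Cfun.hasSum hβ.ne' hs using 2 with n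
  simpa [mode] using integral_cexp_mul_abs_pow_mul_exp_neg_mul_abs 1
    (show 0 < β * ((n : ℝ) + 1) by positivity) s

lemma two_mul_Cfun_le_integral_planckSpectrum {β s : ℝ} (hβ : 0 < β) (hs : s ≠ 0) :
    2 * Cfun β s ≤ ∫ v, planckSpectrum β v := by
  have h := norm_integral_cexp_neg_I_mul_smul_le (fun v => (planckSpectrum β v : ℂ)) s
  simp only [smul_eq_mul, integral_cexp_mul_planckSpectrum hβ hs, Complex.norm_real] at h
  rw [Real.norm_of_nonneg (mul_nonneg zero_le_two (Cfun.nonneg β s))] at h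
  simpa only [Real.norm_of_nonneg (planckSpectrum.nonneg hβ.le _)] using h

lemma integrable_Cfun {β : ℝ} (hβ : 0 < β) : Integrable (Cfun β) := by
  have hmeas : Measurable (Cfun β) :=
    Measurable.ite (measurableSet_singleton 0) measurable_const (by fun_prop)
  refine (integrable_inv_one_add_sq.const_mul (((∫ v, planckSpectrum β v) + 1) / 2)).mono'
    hmeas.aestronglyMeasurable ?_
  filter_upwards [Measure.ae_ne volume 0] with s hs
  rw [Real.norm_of_nonneg (Cfun.nonneg β s), ← div_eq_mul_inv, le_div_iff₀ (by positivity)]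
  linarith [two_mul_Cfun_le_integral_planckSpectrum hβ hs, Cfun.mul_sq_le_half β s]

theorem integral_cexp_mul_Cfun {β E : ℝ} (hβ : 0 < β) (hE : E ≠ 0) :
    ∫ s : ℝ, Complex.exp (-(Complex.I * E * s)) * (Cfun β s : ℂ)
      = ((π * planckSpectrum β E : ℝ) : ℂ) := by
  have hcont : ContinuousAt (fun v => (planckSpectrum β v : ℂ)) (-E) :=
    Complex.continuous_ofReal.continuousAt.comp
      (planckSpectrum.continuousAt hβ (neg_ne_zero.2 hE))
  have h := integral_cexp_neg_I_mul_smul_eq_two_pi_smul (planckSpectrum.integrable hβ).ofReal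
    ((integrable_Cfun hβ).const_mul 2).ofReal
    ((Measure.ae_ne volume 0).mono fun s hs => integral_cexp_mul_planckSpectrum hβ hs) hcont
  simp only [planckSpectrum.neg, smul_eq_mul, Complex.ofReal_mul, mul_left_comm _ ((2 : ℝ) : ℂ),
    integral_const_mul, Complex.real_smul] at h
  push_cast at h ⊢
  linear_combination h / 2

lemma planckRate_eq {β : ℝ} (hβ : β ≠ 0) (E : ℝ) :
    planckRate β E = planckSpectrum β E / (2 * π) - E / (2 * π) * (if E < 0 then 1 else 0) := by
  rw [planckRate, planckSpectrum]
  rcases lt_trichotomy E 0 with hE | rfl | hE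
  · have hexp : 1 - Real.exp (β * E) ≠ 0 := by
      rw [sub_ne_zero, ne_comm, Ne, Real.exp_eq_one_iff]
      exact mul_ne_zero hβ hE.ne
    have hexp_neg : Real.exp (β * -E) - 1 = (1 - Real.exp (β * E)) / Real.exp (β * E) := by
      rw [mul_neg, Real.exp_neg]
      field_simp
    rw [if_pos hE, abs_of_neg hE, hexp_neg, div_div_eq_mul_div, ← neg_sub 1 (Real.exp (β * E))]
    generalize Real.exp (β * E) = q at hexp ⊢
    field_simp
    ring
  · simp
  · rw [if_neg hE.not_gt, abs_of_pos hE]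
    ring

theorem integral_cexp_mul_Cfun_add_Cfun {βL βR E : ℝ} (hL : 0 < βL) (hR : 0 < βR) (hE : E ≠ 0) :
    ∫ s : ℝ, Complex.exp (-(Complex.I * E * s)) *
        (((1 / (4 * π ^ 2)) * (Cfun βL s + Cfun βR s) : ℝ) : ℂ)
      = (((1 / (4 * π)) * (planckSpectrum βL E + planckSpectrum βR E) : ℝ) : ℂ) := by
  have hint {β : ℝ} (hβ : 0 < β) :
      Integrable fun s : ℝ => Complex.exp (-(Complex.I * E * s)) * (Cfun β s : ℂ) :=
    integrable_cexp_neg_I_mul_smul (integrable_Cfun hβ).ofReal E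
  calc _ = ∫ s : ℝ, (1 / (4 * π ^ 2) : ℂ) * (Complex.exp (-(Complex.I * E * s)) * (Cfun βL s : ℂ)
        + Complex.exp (-(Complex.I * E * s)) * (Cfun βR s : ℂ)) := by
        congr! 2 with s
        push_cast
        ring
    _ = (1 / (4 * π ^ 2) : ℂ)
        * ((π * planckSpectrum βL E : ℝ) + (π * planckSpectrum βR E : ℝ)) := by
        rw [integral_const_mul, integral_add (hint hL) (hint hR), integral_cexp_mul_Cfun hL hE,
          integral_cexp_mul_Cfun hR hE]
    _ = _ := by
        push_cast
        field_simp

/-- For `β_L, β_R > 0` and `E ≠ 0`,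
`∫_ℝ e^{−iEs}·(1/(4π²))·(C_{β_L}(s) + C_{β_R}(s)) ds
  = (1/(4π))·(|E|/(e^{β_L|E|}−1) + |E|/(e^{β_R|E|}−1))`,
and consequently this Fourier transform plus the vacuum rate `−(E/(2π))·Θ(−E)` equals the
arithmetic mean `(1/2)(𝓡₀^{(β_L)}(E) + 𝓡₀^{(β_R)}(E))` of the two Planckian rates. -/
theorem stmt9 (βL βR E : ℝ) (hL : 0 < βL) (hR : 0 < βR) (hE : E ≠ 0) :
    (∫ s : ℝ, Complex.exp (-(Complex.I * E * s)) *
        (((1 / (4 * π ^ 2)) * (Cfun βL s + Cfun βR s) : ℝ) : ℂ))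
      = (((1 / (4 * π)) * (|E| / (Real.exp (βL * |E|) - 1)
          + |E| / (Real.exp (βR * |E|) - 1)) : ℝ) : ℂ) ∧
    (∫ s : ℝ, Complex.exp (-(Complex.I * E * s)) *
        (((1 / (4 * π ^ 2)) * (Cfun βL s + Cfun βR s) : ℝ) : ℂ))
      + ((-(E / (2 * π)) * (if E < 0 then 1 else 0) : ℝ) : ℂ)
      = (((1 / 2) * (planckRate βL E + planckRate βR E) : ℝ) : ℂ) := by
  have hfourier := integral_cexp_mul_Cfun_add_Cfun hL hR hE
  refine ⟨hfourier, ?_⟩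
  rw [hfourier, ← Complex.ofReal_add, planckRate_eq hL.ne', planckRate_eq hR.ne']
  congr 1
  ring
end
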